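/- Let ϑ : A → A, ϑ(a) := a·(τ·a)⁻¹, and N : A → A, N(a) := a·(τ·a)·(τ²·a)·(τ³·a). Then: (1) the homomorphism A → Eˣ/N_{E/E₁}(Eˣ) sending (w,z) to the class of w·τ(z)⁻¹ is surjective with kernel equal to im ϑ, so it induces an isomorphism of the coinvariants A_Γ := A/im ϑ with Eˣ/N_{E/E₁}(Eˣ); (2) the map (x, τ(x)) ↦ x is an isomorphism of the fixed subgroup A^τ with ker(N_{E/E₁}) = {x ∈ Eˣ : x·τ²(x) = 1}; and (3) under these two identifications, the map A_Γ → A^τ induced by N is given by sending the class of w ∈ Eˣ to w·τ²(w)⁻¹. -/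

import Mathlib

/-- The automorphism of `Eˣ` induced by a field automorphism `τ` of `E`. -/
def su {F E : Type*} [Field F] [Field E] [Algebra F E] (τ : E ≃ₐ[F] E) : Eˣ ≃* Eˣ :=
  Units.mapEquiv τ.toRingEquiv.toMulEquiv

/-- The action `τ·(x, y) = (τ(y)⁻¹, τ(x))` of the generator `τ` on `A = Eˣ × Eˣ`. -/
def tPair {F E : Type*} [Field F] [Field E] [Algebra F E] (τ : E ≃ₐ[F] E) :
    (Eˣ × Eˣ) ≃* (Eˣ × Eˣ) :=
  (MulEquiv.prodComm : (Eˣ × Eˣ) ≃* (Eˣ × Eˣ)).trans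
    (MulEquiv.prodCongr ((su τ).trans (MulEquiv.inv Eˣ)) (su τ))

/-- The norm map `N(a) = a·(τ·a)·(τ²·a)·(τ³·a)` as a homomorphism of `A = Eˣ × Eˣ`. -/
def NA {F E : Type*} [Field F] [Field E] [Algebra F E] (τ : E ≃ₐ[F] E) :
    (Eˣ × Eˣ) →* (Eˣ × Eˣ) :=
  (MonoidHom.id _) * (tPair τ).toMonoidHom * ((tPair τ).trans (tPair τ)).toMonoidHom *
    ((tPair τ).trans ((tPair τ).trans (tPair τ))).toMonoidHom

/-- The map `ϑ(a) = a·(τ·a)⁻¹` as a homomorphism of `A = Eˣ × Eˣ`. -/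
def thetaHom {F E : Type*} [Field F] [Field E] [Algebra F E] (τ : E ≃ₐ[F] E) :
    (Eˣ × Eˣ) →* (Eˣ × Eˣ) :=
  (MonoidHom.id _) * ((tPair τ).trans (MulEquiv.inv _)).toMonoidHom

/-- The norm homomorphism `N_{E/E₁} : x ↦ x·τ²(x)` (valued in `Eˣ`). -/
def nrm21 {F E : Type*} [Field F] [Field E] [Algebra F E] (τ : E ≃ₐ[F] E) : Eˣ →* Eˣ :=
  (MonoidHom.id Eˣ) * ((su τ).trans (su τ)).toMonoidHom

/-- The homomorphism `A → Eˣ/N_{E/E₁}(Eˣ)` sending `(w, z)` to the class of `w·τ(z)⁻¹`. -/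
def gbar {F E : Type*} [Field F] [Field E] [Algebra F E] (τ : E ≃ₐ[F] E) :
    (Eˣ × Eˣ) →* (Eˣ ⧸ (nrm21 τ).range) :=
  (QuotientGroup.mk' ((nrm21 τ).range)).comp
    ((MonoidHom.fst Eˣ Eˣ) *
      (((su τ).trans (MulEquiv.inv Eˣ)).toMonoidHom.comp (MonoidHom.snd Eˣ Eˣ)))

/-- The `τ`-fixed subgroup `A^τ` of `A = Eˣ × Eˣ`. -/
def Afix {F E : Type*} [Field F] [Field E] [Algebra F E] (τ : E ≃ₐ[F] E) :
    Subgroup (Eˣ × Eˣ) where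
  carrier := {p | tPair τ p = p}
  one_mem' := by simp
  mul_mem' := by
    intro a b ha hb
    simp only [Set.mem_setOf_eq, map_mul] at *
    rw [ha, hb]
  inv_mem' := by
    intro a ha
    simp only [Set.mem_setOf_eq, map_inv] at *
    rw [ha]

/-!
Write the groups additively, let `σ` be the action of `τ` on `G = Eˣ` and let
`t (x, y) = (-σ y, σ x)`. The surjection `r (w, z) = w - σ z` sends `(1 - t) (x, y)` to `x + σ² x`;
conversely, if `r (w, z) = x + σ² x`, then `(w, z) = (1 - t) (x, z + σ x)`. A pair is fixed by `t`
precisely when it is `(x, σ x)` with `x + σ² x = 0`. Finally `t² = -σ²`, so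
`1 + t + t² + t³ = (1 + t) (1 - σ²)`, whose first coordinate is `(1 - σ²) ∘ r`; when `σ⁴ = 1` its
values are fixed by `t`, which determines the second coordinate.
-/

section Endomorphism

variable {A : Type*} [CommGroup A] (f : A →* A)

/-- The homomorphism `a ↦ a·f(a)⁻¹`, whose cokernel is the group of coinvariants of `f`. -/
def coboundary : A →* A :=
  MonoidHom.id A * f⁻¹

/-- The norm `a ↦ a·f(a)·f²(a)·f³(a)` of an endomorphism; it is meant for `f` with `f⁴ = 1`. -/
def fourNorm : A →* A :=
  MonoidHom.id A * f * f.comp f * f.comp (f.comp f)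

theorem fourNorm_apply (a : A) : fourNorm f a = a * f a * f (f a) * f (f (f a)) := rfl

variable {f} in
theorem map_fourNorm (hf : f^[4] = id) (a : A) : f (fourNorm f a) = fourNorm f a := by
  have hfa : f (f (f (f a))) = a := congrFun hf a
  simp only [fourNorm_apply, map_mul, hfa]
  rw [mul_comm, ← mul_assoc, ← mul_assoc]

end Endomorphism

section TwistedSwap

variable {G : Type*} [CommGroup G] (σ : G →* G)

/-- The action `(x, y) ↦ (σ(y)⁻¹, σ(x))` on `G × G`, for an arbitrary endomorphism `σ`. -/
def twistedSwap : G × G →* G × G :=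
  (σ.comp (MonoidHom.snd G G))⁻¹.prod (σ.comp (MonoidHom.fst G G))

/-- The norm `x ↦ x·σ²(x)`; it is `N_{E/E₁}` when `σ` is the action of `τ` on `Eˣ`. -/
def quadraticNorm : G →* G :=
  MonoidHom.id G * σ.comp σ

/-- The homomorphism `(w, z) ↦ w·σ(z)⁻¹`, which identifies the coinvariants of `twistedSwap σ` with
the cokernel of `quadraticNorm σ`. -/
def twistedRatio : G × G →* G :=
  MonoidHom.fst G G * (σ.comp (MonoidHom.snd G G))⁻¹

/-- The class of `twistedRatio σ` in the cokernel of `quadraticNorm σ`. -/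
def twistedRatioClass : G × G →* G ⧸ (quadraticNorm σ).range :=
  (QuotientGroup.mk' (quadraticNorm σ).range).comp (twistedRatio σ)

theorem twistedSwap_apply (p : G × G) : twistedSwap σ p = ((σ p.2)⁻¹, σ p.1) := rfl

theorem quadraticNorm_apply (x : G) : quadraticNorm σ x = x * σ (σ x) := rfl

theorem twistedRatio_apply (p : G × G) : twistedRatio σ p = p.1 * (σ p.2)⁻¹ := rfl

theorem coboundary_twistedSwap_apply (p : G × G) :
    coboundary (twistedSwap σ) p = (p.1 * σ p.2, p.2 * (σ p.1)⁻¹) :=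
  Prod.ext (congrArg (p.1 * ·) (inv_inv (σ p.2))) rfl

theorem twistedSwap_twistedSwap (p : G × G) :
    twistedSwap σ (twistedSwap σ p) = ((σ (σ p.1))⁻¹, (σ (σ p.2))⁻¹) := by
  simp only [twistedSwap_apply, map_inv]

variable {σ} in
theorem twistedSwap_iterate_four (hσ : σ^[4] = id) : (twistedSwap σ)^[4] = id := by
  have hσx (x : G) : σ (σ (σ (σ x))) = x := congrFun hσ x
  funext p
  change twistedSwap σ (twistedSwap σ (twistedSwap σ (twistedSwap σ p))) = p
  simp only [twistedSwap_twistedSwap, map_inv, inv_inv, hσx]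

theorem twistedRatioClass_surjective : Function.Surjective (twistedRatioClass σ) := by
  have ratio_surjective : Function.Surjective (twistedRatio σ) := fun x ↦
    ⟨(x, 1), by rw [twistedRatio_apply, map_one, inv_one, mul_one]⟩
  exact (QuotientGroup.mk'_surjective _).comp ratio_surjective

theorem twistedRatio_coboundary (p : G × G) :
    twistedRatio σ (coboundary (twistedSwap σ) p) = quadraticNorm σ p.1 := by
  rw [coboundary_twistedSwap_apply, twistedRatio_apply, quadraticNorm_apply, map_mul, map_inv,
    mul_inv, inv_inv, mul_assoc, mul_inv_cancel_left]

theorem coboundary_eq_of_twistedRatio_eq {p : G × G} {x : G}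
    (h : twistedRatio σ p = quadraticNorm σ x) :
    coboundary (twistedSwap σ) (x, p.2 * σ x) = p := by
  have fst_eq : p.1 = x * σ (σ x) * σ p.2 := eq_mul_of_mul_inv_eq h
  have fst_coboundary : x * σ (p.2 * σ x) = p.1 := by
    rw [fst_eq, map_mul, mul_comm (σ p.2), mul_assoc]
  rw [coboundary_twistedSwap_apply]
  exact Prod.ext fst_coboundary (mul_inv_cancel_right p.2 (σ x))

theorem ker_twistedRatioClass :
    (twistedRatioClass σ).ker = (coboundary (twistedSwap σ)).range := by
  ext p
  have mem_ker : p ∈ (twistedRatioClass σ).ker ↔ twistedRatio σ p ∈ (quadraticNorm σ).range :=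
    QuotientGroup.eq_one_iff _
  rw [mem_ker]
  constructor
  · rintro ⟨x, hx⟩
    exact ⟨(x, p.2 * σ x), coboundary_eq_of_twistedRatio_eq σ hx.symm⟩
  · rintro ⟨q, rfl⟩
    exact ⟨q.1, (twistedRatio_coboundary σ q).symm⟩

/-- The isomorphism induced by `twistedRatio σ` from the coinvariants of `twistedSwap σ` to the
cokernel of `quadraticNorm σ`. -/
noncomputable def twistedSwapCoinvariantsEquiv :
    (G × G) ⧸ (coboundary (twistedSwap σ)).range ≃* G ⧸ (quadraticNorm σ).range :=
  (QuotientGroup.quotientMulEquivOfEq (ker_twistedRatioClass σ).symm).trans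
    (QuotientGroup.quotientKerEquivOfSurjective _ (twistedRatioClass_surjective σ))

theorem twistedSwap_eq_self_iff {p : G × G} :
    twistedSwap σ p = p ↔ p.2 = σ p.1 ∧ p.1 ∈ (quadraticNorm σ).ker := by
  rw [twistedSwap_apply, Prod.ext_iff, MonoidHom.mem_ker, quadraticNorm_apply,
    mul_eq_one_iff_eq_inv, and_comm, eq_comm (a := σ p.1), eq_comm (b := p.1)]
  exact and_congr_right fun h ↦ by rw [h]

/-- The isomorphism `(x, σ(x)) ↦ x` from the fixed points of `twistedSwap σ` to the kernel of
`quadraticNorm σ`. -/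
def twistedSwapFixedEquiv :
    (twistedSwap σ).eqLocus (MonoidHom.id (G × G)) ≃* (quadraticNorm σ).ker where
  toFun p := ⟨p.1.1, ((twistedSwap_eq_self_iff σ).1 p.2).2⟩
  invFun x := ⟨(x.1, σ x.1), (twistedSwap_eq_self_iff σ).2 ⟨rfl, x.2⟩⟩
  left_inv p := Subtype.ext (Prod.ext rfl ((twistedSwap_eq_self_iff σ).1 p.2).1.symm)
  right_inv _ := rfl
  map_mul' _ _ := rfl

theorem fst_fourNorm_twistedSwap (p : G × G) :
    (fourNorm (twistedSwap σ) p).1 = twistedRatio σ p * (σ (σ (twistedRatio σ p)))⁻¹ := by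
  let q := twistedSwap σ (twistedSwap σ p)
  have ratio_q : twistedRatio σ q = (σ (σ (twistedRatio σ p)))⁻¹ := by
    simp only [q, twistedSwap_twistedSwap, twistedRatio_apply, map_mul, map_inv, mul_inv]
  calc (fourNorm (twistedSwap σ) p).1
      = p.1 * (twistedSwap σ p).1 * q.1 * (twistedSwap σ q).1 := by rw [fourNorm_apply]; rfl
    _ = twistedRatio σ p * twistedRatio σ q := mul_assoc _ _ _
    _ = twistedRatio σ p * (σ (σ (twistedRatio σ p)))⁻¹ := by rw [ratio_q]

variable {σ} in
theorem fourNorm_twistedSwap (hσ : σ^[4] = id) (p : G × G) :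
    fourNorm (twistedSwap σ) p =
      (twistedRatio σ p * (σ (σ (twistedRatio σ p)))⁻¹,
        σ (twistedRatio σ p * (σ (σ (twistedRatio σ p)))⁻¹)) := by
  have fixed := map_fourNorm (twistedSwap_iterate_four hσ) p
  have snd_eq := ((twistedSwap_eq_self_iff σ).1 fixed).1
  rw [← fst_fourNorm_twistedSwap]
  exact Prod.ext rfl snd_eq

end TwistedSwap

theorem su_iterate_of_pow_eq_one {F E : Type*} [Field F] [Field E] [Algebra F E]
    {τ : E ≃ₐ[F] E} {n : ℕ} (hτ : τ ^ n = 1) : (su τ)^[n] = id := by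
  funext x
  have val_iterate (k : ℕ) : ((su τ)^[k] x : E) = (τ ^ k) (x : E) := by
    induction k with
    | zero => rfl
    | succ k ih => rw [Function.iterate_succ_apply', pow_succ', AlgEquiv.mul_apply, ← ih]; rfl
  exact Units.ext ((val_iterate n).trans (by rw [hτ]; rfl))

theorem statement_6_general {G : Type*} [CommGroup G] (σ : G →* G) (hσ : σ^[4] = id) :
    Function.Surjective (twistedRatioClass σ) ∧
    (twistedRatioClass σ).ker = (coboundary (twistedSwap σ)).range ∧
    Nonempty ((G × G) ⧸ (coboundary (twistedSwap σ)).range ≃* G ⧸ (quadraticNorm σ).range) ∧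
    (∃ e : (twistedSwap σ).eqLocus (MonoidHom.id (G × G)) ≃* (quadraticNorm σ).ker,
      ∀ p, (e p : G) = (p : G × G).1) ∧
    (∀ w z : G,
      fourNorm (twistedSwap σ) (w, z) =
        ((w * (σ z)⁻¹) * (σ (σ (w * (σ z)⁻¹)))⁻¹,
          σ ((w * (σ z)⁻¹) * (σ (σ (w * (σ z)⁻¹)))⁻¹))) :=
  ⟨twistedRatioClass_surjective σ, ker_twistedRatioClass σ, ⟨twistedSwapCoinvariantsEquiv σ⟩,
    ⟨twistedSwapFixedEquiv σ, fun _ ↦ rfl⟩, fun w z ↦ fourNorm_twistedSwap hσ (w, z)⟩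

/-- (1) the homomorphism `A → Eˣ/N_{E/E₁}(Eˣ)`, `(w,z) ↦ [w·τ(z)⁻¹]`, is
surjective with kernel `im ϑ`, inducing an isomorphism `A_Γ = A/im ϑ ≅ Eˣ/N_{E/E₁}(Eˣ)`;
(2) `(x, τ(x)) ↦ x` is an isomorphism `A^τ ≅ ker N_{E/E₁}`; (3) under these identifications
the norm map `A_Γ → A^τ` is `[w] ↦ w·τ²(w)⁻¹`, i.e. `N(w,z) = (u·τ²(u)⁻¹, τ(u·τ²(u)⁻¹))`
for `u = w·τ(z)⁻¹`. -/
theorem statement_6 {F E : Type*} [Field F] [Field E] [Algebra F E] [IsGalois F E]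
    (hdeg : Module.finrank F E = 4) (τ : E ≃ₐ[F] E) (hτ : orderOf τ = 4) :
    Function.Surjective (gbar τ) ∧
    (gbar τ).ker = (thetaHom τ).range ∧
    Nonempty (((Eˣ × Eˣ) ⧸ (thetaHom τ).range) ≃* (Eˣ ⧸ (nrm21 τ).range)) ∧
    (∃ e : Afix τ ≃* (nrm21 τ).ker, ∀ p : Afix τ, ((e p : Eˣ)) = (p : Eˣ × Eˣ).1) ∧
    (∀ w z : Eˣ,
      NA τ (w, z) =
        ((w * (su τ z)⁻¹) * (su τ (su τ (w * (su τ z)⁻¹)))⁻¹,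
          su τ ((w * (su τ z)⁻¹) * (su τ (su τ (w * (su τ z)⁻¹)))⁻¹))) :=
  statement_6_general (su τ : Eˣ →* Eˣ) (su_iterate_of_pow_eq_one (hτ ▸ pow_orderOf_eq_one τ))
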